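/- arXiv:1704.06722 — 3 statements merged into one kernel-verified Lean document; each statement's English description precedes it below -/
import Mathlib

section
/- Let X and Y be Banach spaces and T : X → Y a compact linear operator. Then there exist a compact linear operator S : X → c₀ and a bounded linear map R₀ defined on the closed linear span of S(X) in c₀ with ‖R₀‖ ≤ 1 and R₀(Sx) = Tx for all x ∈ X. In particular every compact operator factors through a closed subspace of c₀. -/
open Filter

/-- Schauder: the adjoint of a compact operator maps the dual ball to a totally bounded set. -/
theorem aux_schauder {𝕜 X Y : Type*} [RCLike 𝕜]
    [NormedAddCommGroup X] [NormedSpace 𝕜 X]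
    [NormedAddCommGroup Y] [NormedSpace 𝕜 Y]
    (T : X →L[𝕜] Y) (hT : IsCompactOperator T) :
    TotallyBounded ((fun φ : Y →L[𝕜] 𝕜 => φ.comp T) '' Metric.closedBall 0 1) := by
  rw [Metric.totallyBounded_iff]
  intro ε hε
  have hK : TotallyBounded (T '' Metric.closedBall 0 1) := by
    obtain ⟨K, hK, hsub⟩ := IsCompactOperator.image_closedBall_subset_compact (𝕜₁ := 𝕜)
      (f := T.toLinearMap) hT 1
    exact hK.totallyBounded.subset hsub
  obtain ⟨t, ht, hcov⟩ := Metric.totallyBounded_iff.1 hK (ε / 4) (by positivity)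
  have : Fintype t := ht.fintype
  let Φ : (Y →L[𝕜] 𝕜) →L[𝕜] (t → 𝕜) :=
    ContinuousLinearMap.pi fun i : t => ContinuousLinearMap.apply 𝕜 𝕜 (i : Y)
  have hΦ : ∀ φ (i : t), Φ φ i = φ i := fun φ i => rfl
  have hP : TotallyBounded (Φ '' Metric.closedBall 0 1) := by
    have hb : Bornology.IsBounded (Φ '' Metric.closedBall 0 1) :=
      Φ.lipschitz.isBounded_image Metric.isBounded_closedBall
    exact hb.isCompact_closure.totallyBounded.subset subset_closure
  obtain ⟨u, huP, hu, hucov⟩ := Metric.finite_approx_of_totallyBounded hP (ε / 4) (by positivity)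
  have huP2 : ∀ p ∈ u, ∃ ψ : Y →L[𝕜] 𝕜, ψ ∈ Metric.closedBall (0 : Y →L[𝕜] 𝕜) 1 ∧ Φ ψ = p :=
    fun p hp => huP hp
  choose! g hg using huP2
  refine ⟨(fun p => (g p).comp T) '' u, hu.image _, ?_⟩
  rintro _ ⟨φ, hφ, rfl⟩
  have h1 := hucov ⟨φ, hφ, rfl⟩
  simp only [Set.mem_iUnion, exists_prop] at h1
  obtain ⟨p, hp, hdist⟩ := h1
  simp only [Set.mem_iUnion, exists_prop]
  refine ⟨_, ⟨p, hp, rfl⟩, ?_⟩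
  have hgp := hg p hp
  rw [← hgp.2, Metric.mem_ball, dist_pi_lt_iff (by positivity)] at hdist
  have hφ1 : ‖φ‖ ≤ 1 := by simpa using hφ
  have hψ1 : ‖g p‖ ≤ 1 := by simpa using hgp.1
  rw [Metric.mem_ball, dist_eq_norm]
  refine lt_of_le_of_lt (b := 3 * (ε / 4)) ?_ (by linarith)
  refine ContinuousLinearMap.opNorm_le_of_unit_norm (by positivity) ?_
  intro x hx
  have h2 := hcov ⟨x, by simp [hx], rfl⟩
  simp only [Set.mem_iUnion, exists_prop] at h2
  obtain ⟨y, hy, hxy⟩ := h2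
  rw [Metric.mem_ball, dist_eq_norm] at hxy
  have h3 := hdist ⟨y, hy⟩
  rw [hΦ, hΦ, dist_eq_norm] at h3
  have e : (φ.comp T - (g p).comp T) x = φ (T x - y) + (φ y - g p y) - g p (T x - y) := by
    simp
  rw [e]
  have a1 : ‖φ (T x - y)‖ ≤ ε / 4 := (φ.le_of_opNorm_le hφ1 _).trans (by linarith)
  have a2 : ‖g p (T x - y)‖ ≤ ε / 4 := ((g p).le_of_opNorm_le hψ1 _).trans (by linarith)
  have a3 := norm_sub_le (φ (T x - y) + (φ y - g p y)) (g p (T x - y))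
  have a4 := norm_add_le (φ (T x - y)) (φ y - g p y)
  simp only at h3
  linarith

/-- Grothendieck: a totally bounded set of functionals is dominated by a null family. -/
theorem aux_null {𝕜 X : Type*} [RCLike 𝕜]
    [NormedAddCommGroup X] [NormedSpace 𝕜 X] (K : Set (X →L[𝕜] 𝕜)) (hK : TotallyBounded K) :
    ∃ A : Set (X →L[𝕜] 𝕜), A.Countable ∧ (∀ ε > 0, {a ∈ A | ε ≤ ‖a‖}.Finite) ∧
      ∀ φ ∈ K, ∀ x M, (∀ a ∈ A, ‖a x‖ ≤ M) → ‖φ x‖ ≤ M := by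
  have h := fun k : ℕ => Metric.totallyBounded_iff.1 hK ((1 / 4 : ℝ) ^ k) (by positivity)
  choose F hF hcov using h
  let G : Set (X →L[𝕜] 𝕜) := (fun g => (2 : 𝕜) • g) '' F 0
  let H : ℕ → Set (X →L[𝕜] 𝕜) := fun k =>
    {a | ‖a‖ ≤ 8 * (1 / 2 : ℝ) ^ k} ∩
      (fun q : (X →L[𝕜] 𝕜) × (X →L[𝕜] 𝕜) => ((2 : 𝕜) ^ (k + 2)) • (q.1 - q.2)) ''
        (F (k + 1) ×ˢ F k)
  have hG : G.Finite := (hF 0).image _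
  have hH : ∀ k, (H k).Finite := fun k =>
    (((hF (k + 1)).prod (hF k)).image _).subset Set.inter_subset_right
  refine ⟨G ∪ ⋃ k, H k, ?_, ?_, ?_⟩
  · exact hG.countable.union (Set.countable_iUnion fun k => (hH k).countable)
  · intro ε hε
    obtain ⟨N, hN⟩ := exists_pow_lt_of_lt_one (show 0 < ε / 8 by positivity)
      (show (1 / 2 : ℝ) < 1 by norm_num)
    refine (hG.union (Set.Finite.biUnion (Set.finite_lt_nat N) fun k _ => hH k)).subset ?_
    rintro a ⟨ha | ha, hεa⟩
    · exact Or.inl ha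
    · right
      obtain ⟨k, hk⟩ := Set.mem_iUnion.1 ha
      refine Set.mem_biUnion (x := k) ?_ hk
      by_contra hkN
      have hkN : N ≤ k := not_lt.1 hkN
      have h1 : ‖a‖ ≤ 8 * (1 / 2 : ℝ) ^ k := hk.1
      have h2 : (1 / 2 : ℝ) ^ k ≤ (1 / 2 : ℝ) ^ N :=
        pow_le_pow_of_le_one (by norm_num) (by norm_num) hkN
      linarith
  · intro φ hφ x M hM
    have h1 : ∀ k, ∃ g ∈ F k, ‖φ - g‖ < (1 / 4 : ℝ) ^ k := by
      intro k
      have := hcov k hφ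
      simpa only [Set.mem_iUnion, exists_prop, Metric.mem_ball, dist_eq_norm] using this
    choose p hpF hp using h1
    have h0 : ‖p 0 x‖ ≤ M / 2 := by
      have := hM _ (Or.inl ⟨p 0, hpF 0, rfl⟩)
      rw [_root_.smul_apply, norm_smul, RCLike.norm_ofNat] at this
      linarith
    have hM0 : 0 ≤ M := by linarith [norm_nonneg (p 0 x)]
    have hstep : ∀ k, ‖p (k + 1) x - p k x‖ ≤ M * (1 / 2 : ℝ) ^ (k + 2) := by
      intro k
      have hn : ‖((2 : 𝕜) ^ (k + 2))‖ = (2 : ℝ) ^ (k + 2) := by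
        rw [norm_pow, RCLike.norm_ofNat]
      have hmul : (2 : ℝ) ^ (k + 2) * (1 / 2 : ℝ) ^ (k + 2) = 1 := by
        rw [← mul_pow]; norm_num
      have hmem : ((2 : 𝕜) ^ (k + 2)) • (p (k + 1) - p k) ∈ H k := by
        refine ⟨?_, ⟨(p (k + 1), p k), ⟨hpF _, hpF _⟩, rfl⟩⟩
        change ‖((2 : 𝕜) ^ (k + 2)) • (p (k + 1) - p k)‖ ≤ _
        rw [norm_smul, hn]
        have b1 : ‖p (k + 1) - p k‖ ≤ 2 * (1 / 4 : ℝ) ^ k := by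
          have b2 := norm_sub_le (φ - p k) (φ - p (k + 1))
          rw [sub_sub_sub_cancel_left] at b2
          have b3 : (1 / 4 : ℝ) ^ (k + 1) ≤ (1 / 4 : ℝ) ^ k :=
            pow_le_pow_of_le_one (by norm_num) (by norm_num) (by omega)
          linarith [hp k, hp (k + 1)]
        have b4 : (2 : ℝ) ^ k * (1 / 4 : ℝ) ^ k = (1 / 2 : ℝ) ^ k := by
          rw [← mul_pow]; norm_num
        calc (2 : ℝ) ^ (k + 2) * ‖p (k + 1) - p k‖
            ≤ (2 : ℝ) ^ (k + 2) * (2 * (1 / 4 : ℝ) ^ k) := by gcongr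
          _ = 8 * ((2 : ℝ) ^ k * (1 / 4 : ℝ) ^ k) := by ring
          _ = _ := by rw [b4]
      have := hM _ (Or.inr (Set.mem_iUnion.2 ⟨k, hmem⟩))
      rw [_root_.smul_apply, norm_smul, hn, _root_.sub_apply] at this
      calc ‖p (k + 1) x - p k x‖
          = ((2 : ℝ) ^ (k + 2) * (1 / 2 : ℝ) ^ (k + 2)) * ‖p (k + 1) x - p k x‖ := by
            rw [hmul, one_mul]
        _ = (2 ^ (k + 2) * ‖p (k + 1) x - p k x‖) * (1 / 2 : ℝ) ^ (k + 2) := by ring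
        _ ≤ _ := by gcongr
    have hind : ∀ n, ‖p n x‖ ≤ M * (1 - (1 / 2 : ℝ) ^ (n + 1)) := by
      intro n
      induction n with
      | zero => norm_num; linarith
      | succ n ih =>
        have c1 := norm_add_le (p n x) (p (n + 1) x - p n x)
        rw [add_sub_cancel] at c1
        have c2 := hstep n
        have c3 : M * (1 - (1 / 2 : ℝ) ^ (n + 1)) + M * (1 / 2 : ℝ) ^ (n + 2)
            = M * (1 - (1 / 2 : ℝ) ^ (n + 1 + 1)) := by ring
        linarith
    have hfin : ∀ n : ℕ, ‖φ x‖ ≤ M + (1 / 4 : ℝ) ^ n * ‖x‖ := by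
      intro n
      have d1 := (φ - p n).le_of_opNorm_le (hp n).le x
      rw [_root_.sub_apply] at d1
      have d2 := norm_add_le (p n x) (φ x - p n x)
      rw [add_sub_cancel] at d2
      have d3 : M * (1 - (1 / 2 : ℝ) ^ (n + 1)) ≤ M :=
        mul_le_of_le_one_right hM0 (by linarith [show (0 : ℝ) ≤ (1 / 2 : ℝ) ^ (n + 1) by positivity])
      linarith [hind n]
    have hlim : Tendsto (fun n : ℕ => M + (1 / 4 : ℝ) ^ n * ‖x‖) atTop (nhds (M + 0 * ‖x‖)) :=
      ((tendsto_pow_atTop_nhds_zero_of_lt_one (by norm_num) (by norm_num)).mul_const _).const_add _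
    have := ge_of_tendsto' hlim hfin
    simpa using this

theorem aux_seq {E : Type*} [NormedAddCommGroup E] (A : Set E) (hA : A.Countable)
    (hfin : ∀ ε > 0, {a ∈ A | ε ≤ ‖a‖}.Finite) :
    ∃ f : ℕ → E, Tendsto f atTop (nhds 0) ∧ A ⊆ Set.range f := by
  have := hA.to_subtype
  have := Encodable.ofCountable A
  have hinj : Function.Injective (Encodable.encode : A → ℕ) := Encodable.encode_injective
  refine ⟨Function.extend Encodable.encode (Subtype.val : A → E) 0, ?_, ?_⟩
  · rw [← Nat.cofinite_eq_atTop, Metric.tendsto_nhds]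
    intro ε hε
    rw [Filter.eventually_cofinite]
    have hf : {a : A | ε ≤ ‖(a : E)‖}.Finite := by
      refine Set.Finite.of_finite_image ((hfin ε hε).subset ?_) Subtype.val_injective.injOn
      rintro _ ⟨a, ha, rfl⟩
      exact ⟨a.2, ha⟩
    refine (hf.image Encodable.encode).subset ?_
    intro n hn
    by_cases h : ∃ a : A, Encodable.encode a = n
    · obtain ⟨a, rfl⟩ := h
      refine ⟨a, ?_, rfl⟩
      simpa [hinj.extend_apply] using hn
    · exfalso
      apply hn
      rw [Function.extend_apply' _ _ _ h]
      simpa using hε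
  · intro a ha
    exact ⟨Encodable.encode (⟨a, ha⟩ : A), hinj.extend_apply _ _ _⟩

theorem aux_c0_norm_le {𝕜 : Type*} [RCLike 𝕜] (z : ZeroAtInftyContinuousMap ℕ 𝕜) (C : ℝ)
    (hC : 0 ≤ C) : ‖z‖ ≤ C ↔ ∀ n, ‖z n‖ ≤ C := by
  rw [← ZeroAtInftyContinuousMap.norm_toBCF_eq_norm, BoundedContinuousFunction.norm_le hC]
  rfl

/-- The operator into c₀ given by a null sequence of functionals. -/
theorem aux_op {𝕜 X : Type*} [RCLike 𝕜] [NormedAddCommGroup X] [NormedSpace 𝕜 X]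
    (f : ℕ → (X →L[𝕜] 𝕜)) (hf : Tendsto f atTop (nhds 0)) :
    ∃ S : X →L[𝕜] ZeroAtInftyContinuousMap ℕ 𝕜, ∀ x n, S x n = f n x := by
  obtain ⟨C, hC⟩ := hf.norm.bddAbove_range
  have hC' : ∀ n, ‖f n‖ ≤ C := fun n => hC ⟨n, rfl⟩
  have hC0 : 0 ≤ C := (norm_nonneg _).trans (hC' 0)
  have ht : ∀ x, Tendsto (fun n => f n x) (cocompact ℕ) (nhds 0) := by
    intro x
    rw [Filter.cocompact_eq_cofinite, Nat.cofinite_eq_atTop]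
    have := ((ContinuousLinearMap.apply 𝕜 𝕜 x).continuous.tendsto 0).comp hf
    rw [map_zero] at this
    exact this
  let L : X →ₗ[𝕜] ZeroAtInftyContinuousMap ℕ 𝕜 :=
    { toFun := fun x => ⟨⟨fun n => f n x, continuous_of_discreteTopology⟩, ht x⟩
      map_add' := fun x y => by ext n; exact map_add (f n) x y
      map_smul' := fun c x => by ext n; exact map_smul (f n) c x }
  refine ⟨L.mkContinuous C ?_, fun x n => rfl⟩
  intro x
  rw [aux_c0_norm_le _ _ (by positivity)]
  intro n
  exact (f n).le_of_opNorm_le (hC' n) x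

theorem aux_single {𝕜 X : Type*} [RCLike 𝕜] [NormedAddCommGroup X] [NormedSpace 𝕜 X]
    (g : X →L[𝕜] 𝕜) (z : ZeroAtInftyContinuousMap ℕ 𝕜) :
    IsCompactOperator (g.smulRight z) := by
  have h1 : IsCompactOperator g := isCompactOperator_of_locallyCompactSpace_dom g
  exact h1.clm_comp ((1 : 𝕜 →L[𝕜] 𝕜).smulRight z)

theorem aux_compact {𝕜 X : Type*} [RCLike 𝕜] [NormedAddCommGroup X] [NormedSpace 𝕜 X]
    (f : ℕ → (X →L[𝕜] 𝕜)) (hf : Tendsto f atTop (nhds 0))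
    (S : X →L[𝕜] ZeroAtInftyContinuousMap ℕ 𝕜) (hS : ∀ x n, S x n = f n x) :
    IsCompactOperator S := by
  have he : ∀ k : ℕ, ∃ e : ZeroAtInftyContinuousMap ℕ 𝕜, ∀ n, e n = if n = k then 1 else 0 := by
    intro k
    refine ⟨⟨⟨fun n => if n = k then 1 else 0, continuous_of_discreteTopology⟩, ?_⟩, fun n => rfl⟩
    change Tendsto (fun n => if n = k then (1 : 𝕜) else 0) _ _
    rw [Filter.cocompact_eq_cofinite, Nat.cofinite_eq_atTop]
    refine tendsto_const_nhds.congr' ?_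
    filter_upwards [eventually_gt_atTop k] with n hn
    rw [if_neg hn.ne']
  choose e he using he
  let P : ℕ → (X →L[𝕜] ZeroAtInftyContinuousMap ℕ 𝕜) := fun N =>
    ∑ k ∈ Finset.range N, (f k).smulRight (e k)
  have hPs : ∀ N, P (N + 1) = P N + (f N).smulRight (e N) := fun N => Finset.sum_range_succ _ _
  have hPc : ∀ N, IsCompactOperator (P N) := by
    intro N
    induction N with
    | zero => exact isCompactOperator_zero
    | succ N ih =>
      rw [hPs]
      exact ih.add (aux_single _ _)
  have hPv : ∀ N x n, P N x n = if n < N then f n x else 0 := by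
    intro N x n
    induction N with
    | zero => rfl
    | succ N ih =>
      rw [hPs]
      have : (P N + (f N).smulRight (e N)) x n = P N x n + f N x * e N n := rfl
      rw [this, ih, he]
      rcases lt_trichotomy n N with h | h | h
      · simp [h, h.ne, h.trans (Nat.lt_succ_self N)]
      · simp [h]
      · simp [h.ne', not_lt.2 h.le, show ¬ n < N + 1 by omega]
  refine isCompactOperator_of_tendsto (l := atTop) (F := P) ?_ (Eventually.of_forall hPc)
  refine (Metric.tendsto_atTop (β := ℕ) (α := X →L[𝕜] ZeroAtInftyContinuousMap ℕ 𝕜)).2 ?_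
  intro ε hε
  obtain ⟨N, hN⟩ := Metric.tendsto_atTop.1 hf (ε / 2) (by positivity)
  refine ⟨N, fun M hM => ?_⟩
  refine lt_of_eq_of_lt (dist_eq_norm (P M) S) ?_
  refine lt_of_le_of_lt (b := ε / 2) ?_ (by linarith)
  refine ContinuousLinearMap.opNorm_le_bound _ (by positivity) fun x => ?_
  rw [aux_c0_norm_le _ _ (by positivity)]
  intro n
  have : (P M - S) x n = P M x n - S x n := rfl
  rw [this, hPv, hS]
  split_ifs with h
  · simp only [sub_self, norm_zero]; positivity
  · have h1 := hN n (by omega)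
    rw [dist_zero_right] at h1
    rw [zero_sub, norm_neg]
    exact (f n).le_of_opNorm_le h1.le x

theorem aux_ext {𝕜 X Y Z : Type*} [RCLike 𝕜] [NormedAddCommGroup X] [NormedSpace 𝕜 X]
    [NormedAddCommGroup Y] [NormedSpace 𝕜 Y] [CompleteSpace Y]
    [NormedAddCommGroup Z] [NormedSpace 𝕜 Z] (T : X →ₗ[𝕜] Y) (e : X →ₗ[𝕜] Z)
    (hdense : DenseRange e) (hnorm : ∀ x, ‖T x‖ ≤ 1 * ‖e x‖) :
    ∃ R : Z →L[𝕜] Y, (∀ z, ‖R z‖ ≤ ‖z‖) ∧ ∀ x, R (e x) = T x := by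
  refine ⟨T.extendOfNorm e, fun z => ?_, fun x => ?_⟩
  · simpa using LinearMap.norm_extendOfNorm_apply_le hdense 1 hnorm z
  · exact LinearMap.extendOfNorm_eq hdense ⟨1, hnorm⟩ x

/-- Every compact operator `T : X → Y` between Banach spaces factors through a closed subspace
of `c₀`: there are a compact operator `S : X → c₀` and a bounded operator `R₀` of norm at most
one (i.e. `‖R₀ z‖ ≤ ‖z‖` for all `z`), defined on the closed linear span of `S(X)` in `c₀`,
with `R₀ (S x) = T x` for all `x`. -/
theorem compact_factors_through_c0 {𝕜 X Y : Type*} [RCLike 𝕜]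
    [NormedAddCommGroup X] [NormedSpace 𝕜 X] [CompleteSpace X]
    [NormedAddCommGroup Y] [NormedSpace 𝕜 Y] [CompleteSpace Y]
    (T : X →L[𝕜] Y) (hT : IsCompactOperator T) :
    ∃ S : X →L[𝕜] ZeroAtInftyContinuousMap ℕ 𝕜,
      IsCompactOperator S ∧
      ∃ R₀ : (Submodule.span 𝕜 (Set.range S)).topologicalClosure →L[𝕜] Y,
        (∀ z : (Submodule.span 𝕜 (Set.range S)).topologicalClosure, ‖R₀ z‖ ≤ ‖z‖) ∧
        ∀ x : X,
          R₀ ⟨S x, (Submodule.span 𝕜 (Set.range S)).le_topologicalClosure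
            (Submodule.subset_span ⟨x, rfl⟩)⟩ = T x := by
  obtain ⟨A, hA, hAfin, hdom⟩ := aux_null _ (aux_schauder T hT)
  obtain ⟨f, hf, hAf⟩ := aux_seq A hA hAfin
  obtain ⟨S, hS⟩ := aux_op f hf
  have hTS : ∀ x, ‖T x‖ ≤ ‖S x‖ := by
    intro x
    obtain ⟨g, hg, hgx⟩ := exists_dual_vector'' 𝕜 (T x)
    have h1 := hdom (g.comp T) ⟨g, by simpa using hg, rfl⟩ x ‖S x‖ (by
      intro a ha
      obtain ⟨n, rfl⟩ := hAf ha
      rw [← hS]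
      exact (aux_c0_norm_le (S x) _ (norm_nonneg _)).1 le_rfl n)
    rw [ContinuousLinearMap.comp_apply, hgx] at h1
    simpa using h1
  refine ⟨S, aux_compact f hf S hS, ?_⟩
  let e : X →ₗ[𝕜] (Submodule.span 𝕜 (Set.range S)).topologicalClosure :=
    S.toLinearMap.codRestrict _ fun x =>
      (Submodule.span 𝕜 (Set.range S)).le_topologicalClosure (Submodule.subset_span ⟨x, rfl⟩)
  have hspan : ((Submodule.span 𝕜 (Set.range S) : Submodule 𝕜 _) : Set _) = Set.range S := by
    have : Set.range S = (LinearMap.range S.toLinearMap : Set _) := by ext; simp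
    rw [this, Submodule.span_eq]
  have hdense : DenseRange e := by
    intro z
    rw [closure_subtype]
    have hz : (z : ZeroAtInftyContinuousMap ℕ 𝕜) ∈ closure (Set.range S) := by
      have hz2 := z.2
      rw [← SetLike.mem_coe, Submodule.topologicalClosure_coe, hspan] at hz2
      exact hz2
    refine closure_mono ?_ hz
    rintro _ ⟨x, rfl⟩
    exact ⟨e x, ⟨x, rfl⟩, rfl⟩
  have hnorm : ∀ x, ‖T.toLinearMap x‖ ≤ 1 * ‖e x‖ := fun x => by
    rw [one_mul]; exact hTS x
  obtain ⟨R, hR, hR2⟩ := aux_ext (Z := (Submodule.span 𝕜 (Set.range S)).topologicalClosure)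
    T.toLinearMap e hdense hnorm
  exact ⟨R, hR, hR2⟩
end

section
/- Let T be a compact linear operator from a Banach space X into a 𝒫_λ-space Y. Then for every ε > 0 there exist a sequence (u_n) in X* with ‖u_n‖ → 0 and sup_n ‖u_n‖ ≤ ‖T‖ + ε, and a sequence (y_n) in Y with sup_{‖v‖≤1, v∈Y*} Σ_{n=1}^∞ |v(y_n)| ≤ λ, such that Tx = Σ_{n=1}^∞ u_n(x) y_n for every x ∈ X (the series converging in norm). -/
open Filter

universe u v

/-- A Banach space `Y` is a `𝒫_λ`-space if for all Banach spaces `W ⊆ Z` (via a linear isometric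
embedding) every bounded operator `W → Y` extends to `Z` with norm at most `λ` times bigger. -/
def IsPLambdaSpace (𝕜 : Type*) [RCLike 𝕜] (Y : Type*) [NormedAddCommGroup Y]
    [NormedSpace 𝕜 Y] (lam : ℝ) : Prop :=
  ∀ (W : Type u) (Z : Type v) [NormedAddCommGroup W] [NormedSpace 𝕜 W] [CompleteSpace W]
    [NormedAddCommGroup Z] [NormedSpace 𝕜 Z] [CompleteSpace Z]
    (i : W →ₗᵢ[𝕜] Z) (T : W →L[𝕜] Y),
    ∃ Ttilde : Z →L[𝕜] Y, (∀ w : W, Ttilde (i w) = T w) ∧ ‖Ttilde‖ ≤ lam * ‖T‖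

section Helpers
open scoped ZeroAtInfty Topology

namespace Terz

section C0

variable {𝕜 : Type*} [RCLike 𝕜]

lemma c0_norm_le (f : C₀(ℕ, 𝕜)) {C : ℝ} (hC : 0 ≤ C) : ‖f‖ ≤ C ↔ ∀ n, ‖f n‖ ≤ C := by
  rw [← ZeroAtInftyContinuousMap.norm_toBCF_eq_norm]
  exact BoundedContinuousFunction.norm_le hC

lemma c0_norm_apply_le (f : C₀(ℕ, 𝕜)) (n : ℕ) : ‖f n‖ ≤ ‖f‖ :=
  (c0_norm_le f (norm_nonneg f)).1 le_rfl n

/-- A null sequence as an element of `c₀`. -/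
noncomputable def c0mk (a : ℕ → 𝕜) (ha : Tendsto a atTop (𝓝 0)) : C₀(ℕ, 𝕜) where
  toFun := a
  continuous_toFun := continuous_of_discreteTopology
  zero_at_infty' := by rwa [cocompact_eq_cofinite, Nat.cofinite_eq_atTop]

@[simp] lemma c0mk_apply (a : ℕ → 𝕜) (ha : Tendsto a atTop (𝓝 0)) (n : ℕ) :
    c0mk a ha n = a n := rfl

lemma tendsto_single (n : ℕ) : Tendsto (Pi.single n (1 : 𝕜) : ℕ → 𝕜) atTop (𝓝 0) := by
  refine tendsto_const_nhds.congr' ?_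
  filter_upwards [eventually_gt_atTop n] with m hm
  rw [Pi.single_eq_of_ne (by omega)]

/-- Unit vectors. -/
noncomputable def e (n : ℕ) : C₀(ℕ, 𝕜) := c0mk (Pi.single n 1) (tendsto_single n)

lemma sum_e_apply (s : Finset ℕ) (c : ℕ → 𝕜) (n : ℕ) :
    (∑ i ∈ s, c i • (e i : C₀(ℕ, 𝕜))) n = if n ∈ s then c n else 0 := by
  classical
  induction s using Finset.induction_on with
  | empty => simp
  | insert a s ha ih =>
    rw [Finset.sum_insert ha, ZeroAtInftyContinuousMap.add_apply, ih,
      ZeroAtInftyContinuousMap.smul_apply]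
    simp only [e, c0mk_apply, smul_eq_mul, Finset.mem_insert]
    by_cases h : n = a
    · subst h; simp [ha]
    · simp [h]

lemma c0_tendsto (f : C₀(ℕ, 𝕜)) : Tendsto f atTop (𝓝 0) := by
  have := f.zero_at_infty'
  rw [cocompact_eq_cofinite, Nat.cofinite_eq_atTop] at this
  exact this

lemma c0_hasSum (f : C₀(ℕ, 𝕜)) : HasSum (fun n => f n • (e n : C₀(ℕ, 𝕜))) f := by
  rw [HasSum, SummationFilter.unconditional_filter, Metric.tendsto_atTop]
  intro δ hδ
  obtain ⟨N, hN⟩ := (Metric.tendsto_atTop.1 (c0_tendsto f)) (δ / 2) (half_pos hδ)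
  refine ⟨Finset.range N, fun s hs => ?_⟩
  rw [dist_eq_norm]
  refine lt_of_le_of_lt ((c0_norm_le _ (half_pos hδ).le).2 fun n => ?_) (half_lt_self hδ)
  rw [ZeroAtInftyContinuousMap.sub_apply, sum_e_apply]
  split_ifs with h
  · simpa using (half_pos hδ).le
  · have : N ≤ n := by
      by_contra h'
      exact h (hs (Finset.mem_range.2 (by omega)))
    have := hN n this
    simp only [dist_zero_right] at this
    simpa using this.le

lemma sum_norm_le (w : C₀(ℕ, 𝕜) →L[𝕜] 𝕜) (s : Finset ℕ) :
    ∑ n ∈ s, ‖w (e n)‖ ≤ ‖w‖ := by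
  have hc : ∀ z : 𝕜, ∃ c : 𝕜, ‖c‖ ≤ 1 ∧ c * z = (‖z‖ : 𝕜) := by
    intro z
    by_cases hz : z = 0
    · exact ⟨0, by simp, by simp [hz]⟩
    · refine ⟨(starRingEnd 𝕜 z) / (‖z‖ : 𝕜), ?_, ?_⟩
      · simp [hz]
      · have : (‖z‖ : 𝕜) ≠ 0 := by simpa using hz
        rw [div_mul_eq_mul_div, RCLike.conj_mul]
        field_simp
  choose c hc1 hc2 using hc
  have h1 : ‖∑ n ∈ s, c (w (e n)) • (e n : C₀(ℕ, 𝕜))‖ ≤ 1 := by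
    refine (c0_norm_le _ zero_le_one).2 fun n => ?_
    rw [sum_e_apply]
    split_ifs
    · exact hc1 _
    · simp
  have h2 : w (∑ n ∈ s, c (w (e n)) • (e n : C₀(ℕ, 𝕜))) = ((∑ n ∈ s, ‖w (e n)‖ : ℝ) : 𝕜) := by
    simp [map_sum, hc2]
  have h3 := w.le_opNorm_of_le h1
  rw [h2, RCLike.norm_ofReal, mul_one] at h3
  exact (le_abs_self _).trans h3

lemma small_field : Small.{0} 𝕜 := by
  refine small_of_injective (β := ℝ × ℝ) (f := fun z => (RCLike.re z, RCLike.im z)) ?_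
  intro a b h
  simp only [Prod.mk.injEq] at h
  exact RCLike.ext h.1 h.2

lemma small_c0 : Small.{v} C₀(ℕ, 𝕜) := by
  have : Small.{0} 𝕜 := small_field
  have : Small.{0} (ℕ → 𝕜) := inferInstance
  have : Small.{v} (ℕ → 𝕜) := small_lift.{_, v, 0} _
  exact small_of_injective (f := fun f : C₀(ℕ, 𝕜) => (f : ℕ → 𝕜)) DFunLike.coe_injective

/-- Shrinking is isometric. -/
noncomputable def shrinkIso (W : Type*) [NormedAddCommGroup W] [NormedSpace 𝕜 W] [Small.{v} W] :
    Shrink.{v} W ≃ₗᵢ[𝕜] W where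
  toLinearEquiv := Shrink.linearEquiv 𝕜 W
  norm_map' := fun _ => rfl

lemma extend_c0 {Z : Type*} [NormedAddCommGroup Z] [NormedSpace 𝕜 Z] [CompleteSpace Z]
    [Small.{u} Z] [Small.{v} Z] {Y : Type*} [NormedAddCommGroup Y] [NormedSpace 𝕜 Y] {lam : ℝ} (hlam : 1 ≤ lam)
    (hY : IsPLambdaSpace.{u, v} 𝕜 Y lam) (W : Submodule 𝕜 Z) [CompleteSpace W]
    (S : W →L[𝕜] Y) (hS : ‖S‖ ≤ 1) :
    ∃ L : Z →L[𝕜] Y, (∀ w : W, L w = S w) ∧ ‖L‖ ≤ lam := by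
  have : Small.{u} W := small_of_injective (f := fun w : W => (w : Z)) Subtype.val_injective
  let eW := shrinkIso.{u} (𝕜 := 𝕜) W
  let eZ := shrinkIso.{v} (𝕜 := 𝕜) Z
  have : CompleteSpace (Shrink.{u} W) :=
    (completeSpace_congr (e := eW.toEquiv) eW.isometry.isUniformEmbedding).2 inferInstance
  have : CompleteSpace (Shrink.{v} Z) :=
    (completeSpace_congr (e := eZ.toEquiv) eZ.isometry.isUniformEmbedding).2 inferInstance
  obtain ⟨L, hL1, hL2⟩ := hY (Shrink.{u} W) (Shrink.{v} Z)
    (eZ.symm.toLinearIsometry.comp (W.subtypeₗᵢ.comp eW.toLinearIsometry))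
    (S.comp (eW.toContinuousLinearEquiv : Shrink.{u} W →L[𝕜] W))
  have hn : ‖S.comp (eW.toContinuousLinearEquiv : Shrink.{u} W →L[𝕜] W)‖ ≤ 1 := by
    refine ContinuousLinearMap.opNorm_le_bound _ zero_le_one fun x => ?_
    have := S.le_of_opNorm_le hS (eW x)
    rw [eW.norm_map] at this
    exact this
  refine ⟨L.comp (eZ.symm.toContinuousLinearEquiv : Z →L[𝕜] Shrink.{v} Z), ?_, ?_⟩
  · intro w
    have := hL1 (eW.symm w)
    simpa using this
  · refine ContinuousLinearMap.opNorm_le_bound _ (by linarith) fun x => ?_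
    have h2 : ‖L‖ ≤ lam := hL2.trans (by nlinarith)
    have := L.le_of_opNorm_le h2 (eZ.symm x)
    rw [eZ.symm.norm_map] at this
    exact this

/-- Factorization through a closed subspace of `c₀`. -/
lemma factor {Z : Type*} [NormedAddCommGroup Z] [NormedSpace 𝕜 Z] [CompleteSpace Z]
    {X Y : Type*} [NormedAddCommGroup X] [NormedSpace 𝕜 X]
    [NormedAddCommGroup Y] [NormedSpace 𝕜 Y] [CompleteSpace Y]
    (A : X →ₗ[𝕜] Z) (T : X →L[𝕜] Y) (h : ∀ x, ‖T x‖ ≤ ‖A x‖) :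
    ∃ (W : Submodule 𝕜 Z) (_ : CompleteSpace W) (S : W →L[𝕜] Y), ‖S‖ ≤ 1 ∧
      ∀ x, ∃ w : W, (w : Z) = A x ∧ S w = T x := by
  let R := LinearMap.range A
  obtain ⟨g, hg⟩ := A.rangeRestrict.exists_rightInverse_of_surjective A.range_rangeRestrict
  have hg' : ∀ r : R, A (g r) = r := fun r => by
    have := LinearMap.congr_fun hg r
    exact congrArg Subtype.val this
  let S0 : R →L[𝕜] Y := (T.toLinearMap.comp g).mkContinuous 1 (fun r => by
    have := h (g r)
    rw [hg'] at this
    simpa using this)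
  have hS0 : ‖S0‖ ≤ 1 := LinearMap.mkContinuous_norm_le _ zero_le_one _
  have hS0A : ∀ x, S0 ⟨A x, LinearMap.mem_range_self A x⟩ = T x := by
    intro x
    have := h (g ⟨A x, LinearMap.mem_range_self A x⟩ - x)
    rw [map_sub, map_sub, hg', sub_self, norm_zero, norm_le_zero_iff, sub_eq_zero] at this
    exact this
  let W := R.topologicalClosure
  let ι : R →ₗᵢ[𝕜] W := ⟨Submodule.inclusion R.le_topologicalClosure, fun _ => rfl⟩
  have hd : DenseRange ι.toContinuousLinearMap :=
    denseRange_inclusion_iff R.le_topologicalClosure |>.2 (subset_refl _)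
  have hcW : CompleteSpace W := R.isClosed_topologicalClosure.completeSpace_coe
  refine ⟨W, hcW, S0.extend ι.toContinuousLinearMap, ?_, ?_⟩
  · have := S0.opNorm_extend_le (N := 1) hd (fun x => by
      simp)
    simp only [NNReal.coe_one, one_mul] at this
    exact this.trans hS0
  · intro x
    refine ⟨ι ⟨A x, LinearMap.mem_range_self A x⟩, rfl, ?_⟩
    rw [← hS0A]
    exact S0.extend_eq hd ι.isometry.isUniformInducing _

end C0
end Terz

end Helpers

section Helpers
open scoped ZeroAtInfty Topology
namespace Terz

lemma enumerate {E : Type*} [NormedAddCommGroup E] (S : ℕ → Set E) (hS : ∀ j, (S j).Finite)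
    (b : ℕ → ℝ) (hb : Tendsto b atTop (𝓝 0)) (hSb : ∀ j, ∀ s ∈ S j, ‖s‖ ≤ b j) :
    ∃ w : ℕ → E, Tendsto w atTop (𝓝 0) ∧ (∀ n, w n = 0 ∨ ∃ j, w n ∈ S j) ∧
      ∀ j, ∀ s ∈ S j, ∃ n, w n = s := by
  classical
  let U : Set E := ⋃ j, S j
  have hU : U.Countable := Set.countable_iUnion fun j => (hS j).countable
  let _ : Encodable U := hU.toEncodable
  let w : ℕ → E := Function.extend (Encodable.encode : U → ℕ) Subtype.val 0
  have hw : ∀ s : U, w (Encodable.encode s) = s := fun s =>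
    Encodable.encode_injective.extend_apply _ _ _
  have hw' : ∀ n, w n = 0 ∨ ∃ s : U, Encodable.encode s = n := by
    intro n
    by_cases h : ∃ s : U, Encodable.encode s = n
    · exact Or.inr h
    · left
      exact Function.extend_apply' _ _ _ h
  refine ⟨w, ?_, ?_, ?_⟩
  · rw [← Nat.cofinite_eq_atTop, Metric.tendsto_nhds]
    intro r hr
    rw [Filter.eventually_cofinite]
    obtain ⟨J, hJ⟩ := (Metric.tendsto_atTop.1 hb) r hr
    have hfin : (⋃ j ∈ Set.Iio J, S j).Finite := (Set.finite_Iio J).biUnion fun j _ => hS j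
    have hfin2 : {s : U | (s : E) ∈ ⋃ j ∈ Set.Iio J, S j}.Finite :=
      hfin.preimage Subtype.val_injective.injOn
    refine (hfin2.image Encodable.encode).subset ?_
    intro n hn
    simp only [Set.mem_ofPred_eq, dist_zero_right, not_lt] at hn
    rcases hw' n with h | ⟨s, rfl⟩
    · rw [h, norm_zero] at hn
      linarith
    · refine ⟨s, ?_, rfl⟩
      rw [hw] at hn
      obtain ⟨j, hj⟩ := Set.mem_iUnion.1 s.2
      have h1 := hSb j _ hj
      have : j < J := by
        by_contra h
        have h2 := hJ j (by omega)
        rw [Real.dist_eq, sub_zero] at h2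
        have := le_abs_self (b j)
        linarith
      simp only [Set.mem_ofPred_eq, Set.mem_iUnion]
      exact ⟨j, this, hj⟩
  · intro n
    rcases hw' n with h | ⟨s, rfl⟩
    · exact Or.inl h
    · right
      rw [hw]
      exact Set.mem_iUnion.1 s.2
  · intro j s hs
    exact ⟨Encodable.encode (⟨s, Set.mem_iUnion.2 ⟨j, hs⟩⟩ : U), hw _⟩

lemma null_seq {𝕜 E : Type*} [RCLike 𝕜] [NormedAddCommGroup E] [NormedSpace 𝕜 E] (K : Set E)
    (hK : TotallyBounded K) (M ε : ℝ) (hM : 0 ≤ M) (hε : 0 < ε) (hKM : ∀ k ∈ K, ‖k‖ ≤ M) :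
    ∃ w : ℕ → E, Tendsto w atTop (𝓝 0) ∧ (∀ n, ‖w n‖ ≤ M + ε) ∧
      ∀ (φ : E →L[𝕜] 𝕜) (C : ℝ), (∀ n, ‖φ (w n)‖ ≤ C) → ∀ k ∈ K, ‖φ k‖ ≤ C := by
  have hMε : 0 < M + ε := by linarith
  -- the weights
  obtain ⟨θ, hθ⟩ : ∃ θ : ℝ, θ = ε / (2 * (M + ε)) := ⟨_, rfl⟩
  have hθ0 : 0 < θ := by rw [hθ]; positivity
  have hθM : θ * (M + ε) = ε / 2 := by rw [hθ]; field_simp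
  have hθ1 : θ < 1 := by nlinarith
  let δ : ℕ → ℝ := fun j => ε / 8 * (1 / 4) ^ j
  let a : ℕ → ℝ := fun j => θ * (1 / 2) ^ (j + 1)
  have hδ : ∀ j, 0 < δ j := fun j => by positivity
  have ha : ∀ j, 0 < a j := fun j => by positivity
  have hδa : ∀ j, 2 * δ j = a j * ((M + ε) * (1 / 2) ^ j) := fun j => by
    have h4 : ((1 : ℝ) / 4) ^ j = (1 / 2) ^ j * (1 / 2) ^ j := by rw [← mul_pow]; norm_num
    simp only [δ, a, h4, pow_succ]
    linear_combination (-(1 / 2 : ℝ) * (1 / 2) ^ j * (1 / 2) ^ j) * hθM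
  have hsum : ∀ J, ∑ j ∈ Finset.range J, a j ≤ θ := by
    intro J
    have : ∑ j ∈ Finset.range J, a j = θ * (1 - (1 / 2) ^ J) := by
      induction J with
      | zero => simp
      | succ n ih => rw [Finset.sum_range_succ, ih]; simp only [a, pow_succ]; ring
    rw [this]
    have : (0 : ℝ) < (1 / 2) ^ J := by positivity
    nlinarith
  -- the nets
  have hnet : ∀ j, ∃ t ⊆ K, t.Finite ∧ K ⊆ ⋃ y ∈ t, Metric.ball y (δ j) := fun j =>
    Metric.finite_approx_of_totallyBounded hK (δ j) (hδ j)
  choose F hFK hFfin hFcov using hnet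
  let c : ℝ → E → E := fun r x => ((r⁻¹ : ℝ) : 𝕜) • x
  have hcn : ∀ r x, 0 < r → ‖c r x‖ = ‖x‖ / r := fun r x hr => by
    simp only [c, norm_smul, RCLike.norm_ofReal, abs_of_pos (inv_pos.2 hr)]
    rw [div_eq_inv_mul]
  let S : ℕ → Set E := fun j => Nat.casesOn j (c (1 - θ) '' F 0)
    (fun j => (fun p : E × E => c (a j) (p.1 - p.2)) ''
      {p | p ∈ F (j + 1) ×ˢ F j ∧ ‖p.1 - p.2‖ ≤ 2 * δ j})
  let b : ℕ → ℝ := fun j => 2 * ((M + ε) * (1 / 2) ^ j)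
  have hSfin : ∀ j, (S j).Finite := by
    rintro (_ | j)
    · exact (hFfin 0).image _
    · exact (((hFfin (j + 1)).prod (hFfin j)).subset fun p hp => hp.1).image _
  have hb : Tendsto b atTop (𝓝 0) := by
    have := ((tendsto_pow_atTop_nhds_zero_of_lt_one (r := (1 / 2 : ℝ)) (by norm_num)
      (by norm_num)).const_mul (M + ε)).const_mul 2
    simpa [b] using this
  have hS0 : ∀ s ∈ S 0, ‖s‖ ≤ M + ε := by
    rintro _ ⟨f, hf, rfl⟩
    rw [hcn _ _ (by linarith), div_le_iff₀ (by linarith)]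
    have := hKM f (hFK 0 hf)
    nlinarith
  have hS1 : ∀ j, ∀ s ∈ S (j + 1), ‖s‖ ≤ (M + ε) * (1 / 2) ^ j := by
    rintro j _ ⟨p, hp, rfl⟩
    rw [hcn _ _ (ha j), div_le_iff₀ (ha j)]
    have := hp.2
    rw [hδa] at this
    linarith
  have hSb : ∀ j, ∀ s ∈ S j, ‖s‖ ≤ b j := by
    rintro (_ | j) s hs
    · have := hS0 s hs
      simp only [b, pow_zero]
      linarith
    · have := hS1 j s hs
      simp only [b, pow_succ]
      linarith
  have hSM : ∀ j, ∀ s ∈ S j, ‖s‖ ≤ M + ε := by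
    rintro (_ | j) s hs
    · exact hS0 s hs
    · refine (hS1 j s hs).trans ?_
      have : ((1 : ℝ) / 2) ^ j ≤ 1 := pow_le_one₀ (by norm_num) (by norm_num)
      nlinarith
  obtain ⟨w, hw0, hwS, hSw⟩ := enumerate S hSfin b hb hSb
  refine ⟨w, hw0, ?_, ?_⟩
  · intro n
    rcases hwS n with h | ⟨j, hj⟩
    · rw [h, norm_zero]; exact hMε.le
    · exact hSM j _ hj
  · intro φ C hC k hk
    have hC0 : 0 ≤ C := (norm_nonneg _).trans (hC 0)
    have hcφ : ∀ r x, 0 < r → ‖φ (c r x)‖ = ‖φ x‖ / r := fun r x hr => by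
      simp only [c, map_smul, norm_smul, RCLike.norm_ofReal, abs_of_pos (inv_pos.2 hr)]
      rw [div_eq_inv_mul]
    have hSC : ∀ j, ∀ s ∈ S j, ‖φ s‖ ≤ C := by
      intro j s hs
      obtain ⟨n, rfl⟩ := hSw j s hs
      exact hC n
    have hf : ∀ j, ∃ f ∈ F j, ‖k - f‖ < δ j := by
      intro j
      have := hFcov j hk
      simp only [Set.mem_iUnion, Metric.mem_ball, dist_eq_norm] at this
      obtain ⟨f, hf, h⟩ := this
      exact ⟨f, hf, h⟩
    choose f hfF hfk using hf
    have hδmono : ∀ j, δ (j + 1) ≤ δ j := fun j => by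
      have := hδ j
      simp only [δ, pow_succ] at this ⊢
      linarith
    have hdiff : ∀ j, ‖φ (f (j + 1) - f j)‖ ≤ C * a j := by
      intro j
      have hmem : c (a j) (f (j + 1) - f j) ∈ S (j + 1) := by
        refine ⟨(f (j + 1), f j), ⟨⟨hfF _, hfF _⟩, ?_⟩, rfl⟩
        have h1 := hfk j
        have h2 := hfk (j + 1)
        have h3 := hδmono j
        have : f (j + 1) - f j = (k - f j) - (k - f (j + 1)) := by abel
        simp only [this]
        exact (norm_sub_le _ _).trans (by linarith)
      have := hSC (j + 1) _ hmem
      rwa [hcφ _ _ (ha j), div_le_iff₀ (ha j)] at this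
    have hf0 : ‖φ (f 0)‖ ≤ C * (1 - θ) := by
      have := hSC 0 (c (1 - θ) (f 0)) ⟨f 0, hfF 0, rfl⟩
      rwa [hcφ _ _ (by linarith), div_le_iff₀ (by linarith)] at this
    have hpart : ∀ J, ‖φ (f J)‖ ≤ C * (1 - θ) + C * ∑ j ∈ Finset.range J, a j := by
      intro J
      induction J with
      | zero => simpa using hf0
      | succ n ih =>
        rw [Finset.sum_range_succ]
        have h1 : φ (f (n + 1)) = φ (f n) + φ (f (n + 1) - f n) := by rw [map_sub]; abel
        rw [h1]
        have := norm_add_le (φ (f n)) (φ (f (n + 1) - f n))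
        have := hdiff n
        linarith
    have hJ : ∀ J, ‖φ (f J)‖ ≤ C := fun J => by
      have h1 := hpart J
      have h2 := mul_le_mul_of_nonneg_left (hsum J) hC0
      linarith
    have hlim : Tendsto f atTop (𝓝 k) := by
      rw [tendsto_iff_norm_sub_tendsto_zero]
      refine squeeze_zero (g := δ) (fun _ => norm_nonneg _)
        (fun j => by rw [norm_sub_rev]; exact (hfk j).le) ?_
      have := (tendsto_pow_atTop_nhds_zero_of_lt_one (r := (1 / 4 : ℝ)) (by norm_num)
        (by norm_num)).const_mul (ε / 8)
      simpa [δ] using this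
    exact le_of_tendsto ((φ.continuous.norm.tendsto k).comp hlim) (Eventually.of_forall hJ)

lemma totallyBounded_dual {𝕜 X Y : Type*} [RCLike 𝕜]
    [NormedAddCommGroup X] [NormedSpace 𝕜 X] [NormedAddCommGroup Y] [NormedSpace 𝕜 Y]
    (T : X →L[𝕜] Y) (hT : IsCompactOperator T) :
    TotallyBounded {k : X →L[𝕜] 𝕜 | ∃ g : Y →L[𝕜] 𝕜, ‖g‖ ≤ 1 ∧ k = g.comp T} := by
  have hTB : TotallyBounded (T '' Metric.closedBall (0 : X) 1) := by
    obtain ⟨Q, hQ, hsub⟩ := hT.image_closedBall_subset_compact (f := T.toLinearMap) 1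
    exact hQ.totallyBounded.subset hsub
  rw [Metric.totallyBounded_iff]
  intro r hr
  obtain ⟨t, -, htfin, htcov⟩ := Metric.finite_approx_of_totallyBounded hTB (r / 4) (by positivity)
  have : Fintype t := htfin.fintype
  -- evaluation at the points of the net
  let ev : (Y →L[𝕜] 𝕜) → (t → 𝕜) := fun g i => g i
  have hev : TotallyBounded (ev '' Metric.closedBall 0 1) := by
    obtain ⟨B, hB⟩ : ∃ B : ℝ, ∀ i : t, ‖(i : Y)‖ ≤ B := by
      obtain ⟨B, hB⟩ := (htfin.image (fun y : Y => ‖y‖)).bddAbove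
      exact ⟨B, fun i => hB ⟨i, i.2, rfl⟩⟩
    refine (isCompact_closedBall (0 : t → 𝕜) (max B 0)).totallyBounded.subset ?_
    rintro _ ⟨g, hg, rfl⟩
    rw [mem_closedBall_zero_iff] at hg ⊢
    refine (pi_norm_le_iff_of_nonneg (le_max_right _ _)).2 fun i => ?_
    have := g.le_of_opNorm_le hg (i : Y)
    rw [one_mul] at this
    exact this.trans ((hB i).trans (le_max_left _ _))
  obtain ⟨s, hs, hsfin, hscov⟩ := Metric.finite_approx_of_totallyBounded hev (r / 4) (by positivity)
  obtain ⟨G, hG, hGfin, hGs⟩ : ∃ G ⊆ Metric.closedBall (0 : Y →L[𝕜] 𝕜) 1, G.Finite ∧ ev '' G = s := by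
    obtain ⟨G, hG, h⟩ :=       (Set.exists_subset_image_finite_and (s := Metric.closedBall (0 : Y →L[𝕜] 𝕜) 1) (f := ev)
        (p := fun u => u = s)).1 ⟨s, hs, hsfin, rfl⟩
    exact ⟨G, hG, h.1, h.2⟩
  refine ⟨(fun g : Y →L[𝕜] 𝕜 => g.comp T) '' G, hGfin.image _, ?_⟩
  rintro _ ⟨g, hg, rfl⟩
  have h1 : ev g ∈ ev '' Metric.closedBall 0 1 := ⟨g, by simpa using hg, rfl⟩
  have h2 := hscov h1
  rw [← hGs] at h2
  simp only [Set.mem_iUnion] at h2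
  obtain ⟨_, ⟨h, hhG, rfl⟩, hdist⟩ := h2
  simp only [Set.mem_iUnion]
  refine ⟨h.comp T, ⟨h, hhG, rfl⟩, ?_⟩
  have hh : ‖h‖ ≤ 1 := by simpa using hG hhG
  rw [Metric.mem_ball, dist_eq_norm] at hdist ⊢
  have key : ‖g.comp T - h.comp T‖ ≤ 3 / 4 * r := by
    refine ContinuousLinearMap.opNorm_le_of_unit_norm (by positivity) fun x hx => ?_
    have hTx : T x ∈ T '' Metric.closedBall (0 : X) 1 :=
      ⟨x, by simp [hx], rfl⟩
    have h3 := htcov hTx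
    simp only [Set.mem_iUnion, Metric.mem_ball, dist_eq_norm] at h3
    obtain ⟨y, hy, hxy⟩ := h3
    have e1 := g.le_of_opNorm_le hg (T x - y)
    have e2 := h.le_of_opNorm_le hh (T x - y)
    have e3 : ‖g y - h y‖ ≤ r / 4 := (norm_le_pi_norm (ev g - ev h) ⟨y, hy⟩).trans hdist.le
    have e4 : (g.comp T - h.comp T) x = g (T x - y) - h (T x - y) + (g y - h y) := by
      simp only [sub_apply, ContinuousLinearMap.comp_apply, map_sub]
      abel
    rw [e4]
    have e5 := norm_add_le (g (T x - y) - h (T x - y)) (g y - h y)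
    have e6 := norm_sub_le (g (T x - y)) (h (T x - y))
    linarith
  linarith

end Terz

end Helpers

/-- Terzioğlu's representation theorem: a compact operator `T` from a Banach space `X` into a
`𝒫_λ`-space `Y` admits, for every `ε > 0`, a representation `T x = Σₙ uₙ(x) yₙ` with
`‖uₙ‖ → 0`, `supₙ ‖uₙ‖ ≤ ‖T‖ + ε` and `sup_{‖v‖ ≤ 1} Σₙ |v(yₙ)| ≤ λ`. -/
theorem terzioglu_representation {𝕜 X Y : Type*} [RCLike 𝕜]
    [NormedAddCommGroup X] [NormedSpace 𝕜 X] [CompleteSpace X]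
    [NormedAddCommGroup Y] [NormedSpace 𝕜 Y] [CompleteSpace Y]
    (lam : ℝ) (hlam : 1 ≤ lam) (hY : IsPLambdaSpace.{u, v} 𝕜 Y lam)
    (T : X →L[𝕜] Y) (hT : IsCompactOperator T)
    (ε : ℝ) (hε : 0 < ε) :
    ∃ (u : ℕ → X →L[𝕜] 𝕜) (y : ℕ → Y),
      Tendsto (fun n => ‖u n‖) atTop (nhds 0) ∧
      (∀ n, ‖u n‖ ≤ ‖T‖ + ε) ∧
      (∀ v : Y →L[𝕜] 𝕜, ‖v‖ ≤ 1 →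
        Summable (fun n => ‖v (y n)‖) ∧ (∑' n, ‖v (y n)‖) ≤ lam) ∧
      (∀ x : X, HasSum (fun n => u n x • y n) (T x)) := by
  obtain ⟨w, hw0, hwM, hwφ⟩ := Terz.null_seq (𝕜 := 𝕜)
    {k : X →L[𝕜] 𝕜 | ∃ g : Y →L[𝕜] 𝕜, ‖g‖ ≤ 1 ∧ k = g.comp T}
    (Terz.totallyBounded_dual T hT) ‖T‖ ε (norm_nonneg T) hε (by
      rintro _ ⟨g, hg, rfl⟩
      refine (g.opNorm_comp_le T).trans ?_
      nlinarith [norm_nonneg T])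
  have hwx : ∀ x : X, Tendsto (fun n => w n x) atTop (nhds 0) := fun x => by
    have := ((ContinuousLinearMap.apply 𝕜 𝕜 x).continuous.tendsto (0 : X →L[𝕜] 𝕜)).comp hw0
    simpa [Function.comp_def] using this
  let A : X →ₗ[𝕜] ZeroAtInftyContinuousMap ℕ 𝕜 :=
    { toFun := fun x => Terz.c0mk (fun n => w n x) (hwx x)
      map_add' := fun x z => by ext n; simp
      map_smul' := fun c x => by ext n; simp }
  have hA : ∀ x n, A x n = w n x := fun x n => rfl
  have hTA : ∀ x, ‖T x‖ ≤ ‖A x‖ := by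
    intro x
    obtain ⟨g, hg, hgx⟩ := exists_dual_vector'' 𝕜 (T x)
    have := hwφ (ContinuousLinearMap.apply 𝕜 𝕜 x) ‖A x‖ (fun n => by
      have := Terz.c0_norm_apply_le (A x) n
      rwa [hA] at this) (g.comp T) ⟨g, hg, rfl⟩
    simpa [hgx] using this
  obtain ⟨W, hWc, S, hS, hSA⟩ := Terz.factor A T hTA
  have : Small.{u} (ZeroAtInftyContinuousMap ℕ 𝕜) := Terz.small_c0
  have : Small.{v} (ZeroAtInftyContinuousMap ℕ 𝕜) := Terz.small_c0
  obtain ⟨L, hL, hLn⟩ := Terz.extend_c0 hlam hY W S hS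
  have hLA : ∀ x, L (A x) = T x := fun x => by
    obtain ⟨z, hz, hzT⟩ := hSA x
    rw [← hz, hL, hzT]
  refine ⟨w, fun n => L (Terz.e n), by simpa using hw0.norm, hwM, ?_, ?_⟩
  · intro g hg
    have hb : ∀ s : Finset ℕ, ∑ n ∈ s, ‖g (L (Terz.e n))‖ ≤ lam := fun s => by
      refine (Terz.sum_norm_le (g.comp L) s).trans ((g.opNorm_comp_le L).trans ?_)
      nlinarith [norm_nonneg L]
    exact ⟨summable_of_sum_le (fun _ => norm_nonneg _) hb,
      Real.tsum_le_of_sum_le (fun _ => norm_nonneg _) hb⟩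
  · intro x
    have := L.hasSum (Terz.c0_hasSum (A x))
    rw [hLA] at this
    simpa [Function.comp_def, hA] using this
end

section
/- Every compact linear operator T from a Banach space X into a 𝒫_λ-space Y is infinite-nuclear. -/
open Filter

universe u v

/-- An operator `T : X → Y` is infinite-nuclear if `T x = Σₙ uₙ(x) yₙ` for some sequences `(uₙ)`
in `X*` with `‖uₙ‖ → 0` and `(yₙ)` in `Y` with `sup_{‖v‖ ≤ 1} Σₙ |v(yₙ)| < ∞`. -/
def InfiniteNuclear {𝕜 X Y : Type*} [RCLike 𝕜]
    [NormedAddCommGroup X] [NormedSpace 𝕜 X]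
    [NormedAddCommGroup Y] [NormedSpace 𝕜 Y] (T : X →L[𝕜] Y) : Prop :=
  ∃ (u : ℕ → X →L[𝕜] 𝕜) (y : ℕ → Y),
    Tendsto (fun n => ‖u n‖) atTop (nhds 0) ∧
    (∃ C : ℝ, ∀ v : Y →L[𝕜] 𝕜, ‖v‖ ≤ 1 →
      Summable (fun n => ‖v (y n)‖) ∧ (∑' n, ‖v (y n)‖) ≤ C) ∧
    (∀ x : X, HasSum (fun n => u n x • y n) (T x))

universe w

open scoped ZeroAtInfty

theorem small_rclike (𝕜 : Type*) [RCLike 𝕜] : Small.{0} 𝕜 := by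
  refine small_of_injective (β := ℝ × ℝ) (f := fun z => (RCLike.re z, RCLike.im z)) ?_
  intro a b h
  simp only [Prod.mk.injEq] at h
  exact RCLike.ext h.1 h.2

theorem small_of_small_zero (α : Type*) [Small.{0} α] : Small.{w} α :=
  small_map (equivShrink.{0} α)

theorem small_czero (𝕜 : Type*) [RCLike 𝕜] : Small.{w} C₀(ℕ, 𝕜) := by
  have := small_rclike 𝕜
  have : Small.{0} C₀(ℕ, 𝕜) :=
    small_of_injective (f := fun a : C₀(ℕ, 𝕜) => (a : ℕ → 𝕜)) DFunLike.coe_injective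
  exact small_of_small_zero _

theorem IsPLambdaSpace.small_ext {𝕜 Y E F : Type*} [RCLike 𝕜]
    [NormedAddCommGroup Y] [NormedSpace 𝕜 Y]
    {lam : ℝ} (hY : IsPLambdaSpace.{u, v} 𝕜 Y lam)
    [NormedAddCommGroup E] [NormedSpace 𝕜 E] [CompleteSpace E]
    [NormedAddCommGroup F] [NormedSpace 𝕜 F] [CompleteSpace F]
    [Small.{u} E] [Small.{v} F] (i : E →ₗᵢ[𝕜] F) (S : E →L[𝕜] Y) :
    ∃ S' : F →L[𝕜] Y, ∀ w : E, S' (i w) = S w := by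
  let eE := (equivShrink.{u} E).symm
  let eF := (equivShrink.{v} F).symm
  let : NormedAddCommGroup (Shrink.{u} E) := eE.normedAddCommGroup
  let : NormedSpace 𝕜 (Shrink.{u} E) := eE.normedSpace 𝕜
  let : NormedAddCommGroup (Shrink.{v} F) := eF.normedAddCommGroup
  let : NormedSpace 𝕜 (Shrink.{v} F) := eF.normedSpace 𝕜
  let lE : Shrink.{u} E ≃ₗᵢ[𝕜] E := { eE.linearEquiv 𝕜 with norm_map' := fun _ => rfl }
  let lF : Shrink.{v} F ≃ₗᵢ[𝕜] F := { eF.linearEquiv 𝕜 with norm_map' := fun _ => rfl }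
  have : CompleteSpace (Shrink.{u} E) :=
    (completeSpace_congr (e := lE.toEquiv) lE.isometry.isUniformEmbedding).2 inferInstance
  have : CompleteSpace (Shrink.{v} F) :=
    (completeSpace_congr (e := lF.toEquiv) lF.isometry.isUniformEmbedding).2 inferInstance
  obtain ⟨R, hR, -⟩ := hY (Shrink.{u} E) (Shrink.{v} F)
    (lF.symm.toLinearIsometry.comp (i.comp lE.toLinearIsometry))
    (S.comp (lE.toContinuousLinearEquiv : Shrink.{u} E →L[𝕜] E))
  refine ⟨R.comp (lF.symm.toContinuousLinearEquiv : F →L[𝕜] Shrink.{v} F), fun w => ?_⟩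
  have := hR (lE.symm w)
  simpa using this

noncomputable def seqMk {𝕜 : Type*} [RCLike 𝕜] (a : ℕ → 𝕜) (h : Tendsto a cofinite (nhds 0)) :
    C₀(ℕ, 𝕜) :=
  ⟨⟨a, continuous_of_discreteTopology⟩, by rw [Filter.cocompact_eq_cofinite]; exact h⟩

@[simp] theorem seqMk_apply {𝕜 : Type*} [RCLike 𝕜] (a : ℕ → 𝕜)
    (h : Tendsto a cofinite (nhds 0)) (n : ℕ) : seqMk a h n = a n := rfl

theorem czero_tendsto {𝕜 : Type*} [RCLike 𝕜] (a : C₀(ℕ, 𝕜)) :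
    Tendsto a cofinite (nhds 0) := by
  have := a.zero_at_infty'
  rw [Filter.cocompact_eq_cofinite] at this
  exact this

theorem czero_norm_le {𝕜 : Type*} [RCLike 𝕜] (a : C₀(ℕ, 𝕜)) {M : ℝ} (hM : 0 ≤ M)
    (h : ∀ n, ‖a n‖ ≤ M) : ‖a‖ ≤ M := by
  rw [← ZeroAtInftyContinuousMap.norm_toBCF_eq_norm]
  exact (BoundedContinuousFunction.norm_le hM).2 h

theorem czero_apply_le {𝕜 : Type*} [RCLike 𝕜] (a : C₀(ℕ, 𝕜)) (n : ℕ) : ‖a n‖ ≤ ‖a‖ := by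
  rw [← ZeroAtInftyContinuousMap.norm_toBCF_eq_norm]
  exact BoundedContinuousFunction.norm_coe_le_norm a.toBCF n

noncomputable def seqUnit (𝕜 : Type*) [RCLike 𝕜] (n : ℕ) : C₀(ℕ, 𝕜) :=
  seqMk (Pi.single n 1) (by
    refine tendsto_const_nhds.congr' ?_
    have : ∀ᶠ m in cofinite, m ∉ ({n} : Set ℕ) := (Set.finite_singleton n).eventually_cofinite_notMem
    filter_upwards [this] with m hm
    have : m ≠ n := hm
    simp [this])

theorem czero_sum_apply {𝕜 : Type*} [RCLike 𝕜] (s : Finset ℕ) (c : ℕ → 𝕜) (m : ℕ) :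
    (∑ n ∈ s, c n • seqUnit 𝕜 n) m = if m ∈ s then c m else 0 := by
  classical
  induction s using Finset.induction_on with
  | empty => simp
  | insert k s hk ih =>
    rw [Finset.sum_insert hk, ZeroAtInftyContinuousMap.add_apply, ih]
    by_cases h : m = k
    · subst h; simp [hk, seqUnit]
    · simp [h, seqUnit]

theorem czero_hasSum {𝕜 : Type*} [RCLike 𝕜] (a : C₀(ℕ, 𝕜)) :
    HasSum (fun n => a n • seqUnit 𝕜 n) a := by
  rw [HasSum, SummationFilter.unconditional_filter, Metric.tendsto_atTop]
  intro ε hε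
  have hf : {n | ¬ ‖a n‖ < ε / 2}.Finite := by
    have h0 : ‖(0 : 𝕜)‖ < ε / 2 := by simpa using half_pos hε
    exact (czero_tendsto a).norm.eventually (gt_mem_nhds h0)
  refine ⟨hf.toFinset, fun s hs => ?_⟩
  rw [dist_eq_norm]
  refine lt_of_le_of_lt (czero_norm_le _ (half_pos hε).le fun m => ?_) (half_lt_self hε)
  rw [ZeroAtInftyContinuousMap.sub_apply, czero_sum_apply]
  split_ifs with h
  · simp only [sub_self, norm_zero]; positivity
  · have : m ∉ hf.toFinset := fun h' => h (hs h')
    simp only [Set.Finite.mem_toFinset, Set.mem_ofPred_eq, not_not] at this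
    simpa using this.le

theorem czero_dual_sum_le {𝕜 : Type*} [RCLike 𝕜] (φ : C₀(ℕ, 𝕜) →L[𝕜] 𝕜) (s : Finset ℕ) :
    ∑ n ∈ s, ‖φ (seqUnit 𝕜 n)‖ ≤ ‖φ‖ := by
  let c : ℕ → 𝕜 := fun n => (starRingEnd 𝕜) (φ (seqUnit 𝕜 n)) / (‖φ (seqUnit 𝕜 n)‖ : 𝕜)
  have hc : ∀ n, ‖c n‖ ≤ 1 := fun n => by
    simp only [c, norm_div, RCLike.norm_conj, RCLike.norm_ofReal, abs_norm]
    exact div_self_le_one _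
  have hφ : φ (∑ n ∈ s, c n • seqUnit 𝕜 n) = ((∑ n ∈ s, ‖φ (seqUnit 𝕜 n)‖ : ℝ) : 𝕜) := by
    rw [map_sum, RCLike.ofReal_sum]
    refine Finset.sum_congr rfl fun n _ => ?_
    rw [map_smul, smul_eq_mul]
    by_cases h : φ (seqUnit 𝕜 n) = 0
    · simp [h]
    · have h' : (‖φ (seqUnit 𝕜 n)‖ : 𝕜) ≠ 0 := by simpa using h
      simp only [c]
      rw [div_mul_eq_mul_div, RCLike.conj_mul, sq, mul_div_assoc, div_self h', mul_one]
  have h1 : ‖∑ n ∈ s, c n • seqUnit 𝕜 n‖ ≤ 1 := czero_norm_le _ zero_le_one fun m => by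
    rw [czero_sum_apply]
    split_ifs
    · exact hc m
    · simp
  have h2 := φ.le_opNorm_of_le h1
  rw [hφ, RCLike.norm_ofReal, abs_of_nonneg (by positivity), mul_one] at h2
  exact h2

theorem schauder_net {𝕜 X Y : Type*} [RCLike 𝕜]
    [NormedAddCommGroup X] [NormedSpace 𝕜 X] [NormedAddCommGroup Y] [NormedSpace 𝕜 Y]
    (T : X →L[𝕜] Y) (hT : IsCompactOperator T) (ε : ℝ) (hε : 0 < ε) :
    ∃ N : Finset (X →L[𝕜] 𝕜), ∀ v : Y →L[𝕜] 𝕜, ‖v‖ ≤ 1 → ∃ g ∈ N, ‖v.comp T - g‖ ≤ ε := by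
  classical
  obtain ⟨K, hK, hTK⟩ := IsCompactOperator.image_closedBall_subset_compact
    (f := (T : X →ₗ[𝕜] Y)) hT 1
  obtain ⟨t, -, htf, ht⟩ := Metric.finite_approx_of_totallyBounded hK.totallyBounded (ε / 3)
    (by positivity)
  have := htf.fintype
  let ev : (Y →L[𝕜] 𝕜) → (t → 𝕜) := fun v y => v y
  let Z : Set (t → 𝕜) := ev '' {v | ‖v‖ ≤ 1}
  have hZ : TotallyBounded Z := by
    refine TotallyBounded.subset (s₂ := Set.pi Set.univ fun y : t => Metric.closedBall 0 ‖(y : Y)‖)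
      ?_ (IsCompact.totallyBounded (isCompact_univ_pi fun y => isCompact_closedBall _ _))
    rintro _ ⟨v, hv, rfl⟩ y -
    simpa using v.le_of_opNorm_le hv y
  obtain ⟨t', ht'Z, ht'f, ht'⟩ := Metric.finite_approx_of_totallyBounded hZ (ε / 3) (by positivity)
  obtain ⟨N, hN, hNf, hNt⟩ := (Set.exists_subset_image_finite_and
    (p := fun q => q = t')).1 ⟨t', ht'Z, ht'f, rfl⟩
  refine ⟨hNf.toFinset.image fun v => v.comp T, fun v hv => ?_⟩
  have hvZ : ev v ∈ ⋃ y ∈ t', Metric.ball y (ε / 3) := ht' ⟨v, hv, rfl⟩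
  simp only [Set.mem_iUnion, exists_prop] at hvZ
  obtain ⟨z, hz, hvz⟩ := hvZ
  rw [← hNt] at hz
  obtain ⟨w, hw, rfl⟩ := hz
  refine ⟨w.comp T, Finset.mem_image_of_mem _ (by simpa using hw), ?_⟩
  have hw1 : ‖w‖ ≤ 1 := hN hw
  refine ContinuousLinearMap.opNorm_le_of_unit_norm hε.le fun x hx => ?_
  have hxK : T x ∈ ⋃ y ∈ t, Metric.ball y (ε / 3) := ht (hTK ⟨x, by simp [hx], rfl⟩)
  simp only [Set.mem_iUnion, exists_prop] at hxK
  obtain ⟨y, hy, hxy⟩ := hxK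
  rw [mem_ball_iff_norm] at hxy
  have h1 : ‖v (T x - y)‖ ≤ ε / 3 := by
    have := v.le_of_opNorm_le hv (T x - y)
    linarith
  have h2 : ‖w (T x - y)‖ ≤ ε / 3 := by
    have := w.le_of_opNorm_le hw1 (T x - y)
    linarith
  have h3 : ‖v y - w y‖ ≤ ε / 3 := by
    rw [mem_ball_iff_norm] at hvz
    exact (norm_le_pi_norm (ev v - ev w) ⟨y, hy⟩).trans hvz.le
  have h4 : (v.comp T - w.comp T) x = v (T x - y) - w (T x - y) + (v y - w y) := by
    simp only [sub_apply, ContinuousLinearMap.comp_apply, map_sub]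
    ring
  rw [h4]
  calc _ ≤ ‖v (T x - y)‖ + ‖w (T x - y)‖ + ‖v y - w y‖ :=
        (norm_add_le _ _).trans (by gcongr; exact norm_sub_le _ _)
    _ ≤ ε := by linarith

theorem exists_ext_of_dense {𝕜 X Y E : Type*} [RCLike 𝕜]
    [NormedAddCommGroup X] [NormedSpace 𝕜 X]
    [NormedAddCommGroup Y] [NormedSpace 𝕜 Y] [CompleteSpace Y]
    [NormedAddCommGroup E] [NormedSpace 𝕜 E]
    (T : X →L[𝕜] Y) (A : X →ₗ[𝕜] E) (hd : DenseRange A) (C : ℝ)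
    (h : ∀ x, ‖T x‖ ≤ C * ‖A x‖) : ∃ R : E →L[𝕜] Y, ∀ x, R (A x) = T x :=
  ⟨(T : X →ₗ[𝕜] Y).extendOfNorm A, LinearMap.extendOfNorm_eq hd ⟨C, h⟩⟩

theorem null_sequence {𝕜 X Y : Type*} [RCLike 𝕜]
    [NormedAddCommGroup X] [NormedSpace 𝕜 X] [NormedAddCommGroup Y] [NormedSpace 𝕜 Y]
    (T : X →L[𝕜] Y) (hT : IsCompactOperator T) :
    ∃ u : ℕ → X →L[𝕜] 𝕜, Tendsto (fun n => ‖u n‖) cofinite (nhds 0) ∧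
      ∀ (x : X) (M : ℝ), (∀ n, ‖u n x‖ ≤ M) → ‖T x‖ ≤ 2 * M := by
  classical
  obtain ⟨c, hc0, hc⟩ : ∃ c : ℝ, 0 < c ∧ ‖T‖ ≤ c := ⟨‖T‖ + 1, by positivity, by linarith⟩
  have hnet : ∀ k : ℕ, ∃ N : Finset (X →L[𝕜] 𝕜), (k = 0 → N = {0}) ∧
      ∀ v : Y →L[𝕜] 𝕜, ‖v‖ ≤ 1 → ∃ g ∈ N, ‖v.comp T - g‖ ≤ c * (1 / 4) ^ k := by
    intro k
    rcases Nat.eq_zero_or_pos k with rfl | hk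
    · refine ⟨{0}, fun _ => rfl, fun v hv => ⟨0, by simp, ?_⟩⟩
      have h1 := v.opNorm_comp_le T
      have h2 : ‖v‖ * ‖T‖ ≤ 1 * c := by gcongr
      simpa using h1.trans (by simpa using h2)
    · obtain ⟨N, hN⟩ := schauder_net T hT (c * (1 / 4) ^ k) (by positivity)
      exact ⟨N, fun h => absurd h hk.ne', hN⟩
  choose N hN0 hN using hnet
  let ι := Σ k : ℕ, Option (N (k + 1) × N k)
  have : Infinite ι := Infinite.of_injective (fun k : ℕ => (⟨k, none⟩ : ι)) fun a b h => by
    simpa using congrArg Sigma.fst h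
  have : Countable ι := by infer_instance
  obtain ⟨e⟩ : Nonempty (ℕ ≃ ι) := by
    obtain ⟨d⟩ := nonempty_denumerable ι
    exact ⟨(Denumerable.eqv ι).symm⟩
  let g : ι → X →L[𝕜] 𝕜 := fun i => match i with
    | ⟨_, none⟩ => 0
    | ⟨k, some (a, b)⟩ => if ‖(a : X →L[𝕜] 𝕜) - b‖ ≤ 2 * c * (1 / 4) ^ k
        then ((2 : 𝕜) ^ k) • ((a : X →L[𝕜] 𝕜) - b) else 0
  have hg : ∀ i : ι, ‖g i‖ ≤ 2 * c * (1 / 2) ^ i.1 := by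
    rintro ⟨k, _ | ⟨a, b⟩⟩
    · simp only [g, norm_zero]; positivity
    · simp only [g]
      split_ifs with h
      · rw [norm_smul, norm_pow, RCLike.norm_ofNat]
        calc (2 : ℝ) ^ k * ‖(a : X →L[𝕜] 𝕜) - b‖ ≤ 2 ^ k * (2 * c * (1 / 4) ^ k) := by gcongr
          _ = 2 * c * (2 * (1 / 4)) ^ k := by rw [mul_pow]; ring
          _ = 2 * c * (1 / 2) ^ k := by norm_num
      · rw [norm_zero]; positivity
  have hfst : Tendsto (fun i : ι => i.1) cofinite atTop := by
    rw [← Nat.cofinite_eq_atTop]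
    refine Tendsto.cofinite_of_finite_preimage_singleton fun k => ?_
    refine (Set.finite_range (fun o : Option (N (k + 1) × N k) => (⟨k, o⟩ : ι))).subset ?_
    rintro ⟨k', o⟩ h
    obtain rfl : k' = k := h
    exact ⟨o, rfl⟩
  have hgt : Tendsto (fun i => ‖g i‖) cofinite (nhds 0) := by
    refine squeeze_zero (fun _ => norm_nonneg _) hg ?_
    have h1 : Tendsto (fun k : ℕ => 2 * c * (1 / 2 : ℝ) ^ k) atTop (nhds (2 * c * 0)) :=
      (tendsto_pow_atTop_nhds_zero_of_lt_one (by norm_num) (by norm_num)).const_mul _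
    rw [mul_zero] at h1
    exact h1.comp hfst
  refine ⟨fun n => g (e n), hgt.comp e.injective.tendsto_cofinite, fun x M hM => ?_⟩
  have hM' : ∀ i, ‖g i x‖ ≤ M := fun i => by simpa using hM (e.symm i)
  have hM0 : 0 ≤ M := (norm_nonneg _).trans (hM 0)
  obtain ⟨v, hv, hvx⟩ := exists_dual_vector'' 𝕜 (T x)
  choose f hfN hf using fun k => hN k v hv
  have hf0 : f 0 = 0 := by simpa [hN0 0 rfl] using hfN 0
  have hstep : ∀ k, ‖(f (k + 1) - f k) x‖ ≤ (1 / 2) ^ k * M := by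
    intro k
    have h1 : ‖f (k + 1) - f k‖ ≤ 2 * c * (1 / 4) ^ k := by
      have h2 : f (k + 1) - f k = (v.comp T - f k) - (v.comp T - f (k + 1)) := by abel
      rw [h2]
      refine (norm_sub_le _ _).trans ?_
      have h3 := hf k
      have h4 := hf (k + 1)
      have h5 : c * (1 / 4 : ℝ) ^ (k + 1) ≤ c * (1 / 4) ^ k := by
        rw [pow_succ]
        have : 0 < c * (1 / 4 : ℝ) ^ k := by positivity
        nlinarith
      linarith
    have h6 := hM' ⟨k, some (⟨f (k + 1), hfN _⟩, ⟨f k, hfN k⟩)⟩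
    simp only [g, if_pos h1] at h6
    rw [smul_apply, norm_smul, norm_pow, RCLike.norm_ofNat] at h6
    calc _ = (1 / 2) ^ k * ((2 : ℝ) ^ k * ‖(f (k + 1) - f k) x‖) := by
          rw [← mul_assoc, ← mul_pow]; norm_num
      _ ≤ _ := by gcongr
  have hind : ∀ k, ‖f k x‖ ≤ (2 - 2 * (1 / 2) ^ k) * M := by
    intro k
    induction k with
    | zero => simp [hf0]
    | succ k ih =>
      have h1 : f (k + 1) x = f k x + (f (k + 1) - f k) x := by simp
      rw [h1]
      refine (norm_add_le _ _).trans ((add_le_add ih (hstep k)).trans (le_of_eq ?_))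
      rw [pow_succ]; ring
  have hfin : ∀ k : ℕ, ‖T x‖ ≤ 2 * M + c * (1 / 4) ^ k * ‖x‖ := by
    intro k
    have h1 : ‖T x‖ = ‖f k x + (v.comp T - f k) x‖ := by simp [hvx]
    rw [h1]
    refine (norm_add_le _ _).trans (add_le_add ((hind k).trans ?_)
      ((v.comp T - f k).le_of_opNorm_le (hf k) x))
    gcongr
    have : (0 : ℝ) < (1 / 2) ^ k := by positivity
    linarith
  have hlim : Tendsto (fun k : ℕ => 2 * M + c * (1 / 4 : ℝ) ^ k * ‖x‖) atTop
      (nhds (2 * M + c * 0 * ‖x‖)) :=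
    (((tendsto_pow_atTop_nhds_zero_of_lt_one (by norm_num) (by norm_num)).const_mul c).mul_const
      _).const_add _
  have := ge_of_tendsto' hlim hfin
  simpa using this

/-- Every compact operator from a Banach space into a `𝒫_λ`-space is infinite-nuclear. -/
theorem compact_to_PLambda_infiniteNuclear {𝕜 X Y : Type*} [RCLike 𝕜]
    [NormedAddCommGroup X] [NormedSpace 𝕜 X] [CompleteSpace X]
    [NormedAddCommGroup Y] [NormedSpace 𝕜 Y] [CompleteSpace Y]
    (lam : ℝ) (hlam : 1 ≤ lam) (hY : IsPLambdaSpace.{u, v} 𝕜 Y lam)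
    (T : X →L[𝕜] Y) (hT : IsCompactOperator T) :
    InfiniteNuclear T := by
  obtain ⟨u, hu, hbound⟩ := null_sequence T hT
  have hux : ∀ x, Tendsto (fun n => u n x) cofinite (nhds 0) := fun x => by
    refine squeeze_zero_norm (fun n => (u n).le_opNorm x) ?_
    simpa using hu.mul_const ‖x‖
  let A : X →ₗ[𝕜] C₀(ℕ, 𝕜) :=
    { toFun := fun x => seqMk (fun n => u n x) (hux x)
      map_add' := fun x y => by ext n; simp
      map_smul' := fun c x => by ext n; simp }
  have hA : ∀ x, ‖T x‖ ≤ 2 * ‖A x‖ := fun x => hbound x _ fun n => czero_apply_le (A x) n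
  let W : Submodule 𝕜 C₀(ℕ, 𝕜) := (LinearMap.range A).topologicalClosure
  have hWc : IsClosed (W : Set C₀(ℕ, 𝕜)) := Submodule.isClosed_topologicalClosure _
  have : CompleteSpace W := hWc.completeSpace_coe
  let A' : X →ₗ[𝕜] W := A.codRestrict W fun x =>
    Submodule.le_topologicalClosure _ (LinearMap.mem_range_self A x)
  have hdense : DenseRange A' := by
    rintro ⟨w, hw⟩
    rw [Metric.mem_closure_iff]
    intro ε hε
    have hw' : w ∈ closure (LinearMap.range A : Set C₀(ℕ, 𝕜)) := hw
    obtain ⟨_, ⟨x, rfl⟩, hx⟩ := Metric.mem_closure_iff.1 hw' ε hε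
    exact ⟨A' x, ⟨x, rfl⟩, hx⟩
  have := small_czero.{u} 𝕜
  have := small_czero.{v} 𝕜
  have : Small.{u} W := small_of_injective (f := fun w : W => (w : C₀(ℕ, 𝕜))) Subtype.val_injective
  obtain ⟨R, hR⟩ := exists_ext_of_dense (E := W) T A' hdense 2 hA
  obtain ⟨S, hS⟩ := hY.small_ext W.subtypeₗᵢ R
  have hST : ∀ x, S (A x) = T x := fun x => by
    have h1 := hS (A' x)
    rw [hR] at h1
    exact h1
  refine ⟨u, fun n => S (seqUnit 𝕜 n), by rwa [Nat.cofinite_eq_atTop] at hu, ⟨‖S‖, fun v hv => ?_⟩,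
    fun x => ?_⟩
  · have hb : ∀ s : Finset ℕ, ∑ n ∈ s, ‖v (S (seqUnit 𝕜 n))‖ ≤ ‖S‖ := fun s => by
      refine (czero_dual_sum_le (v.comp S) s).trans ((v.opNorm_comp_le S).trans ?_)
      exact mul_le_of_le_one_left (norm_nonneg _) hv
    have hs := summable_of_sum_le (fun n => norm_nonneg (v (S (seqUnit 𝕜 n)))) hb
    exact ⟨hs, hs.tsum_le_of_sum_le hb⟩
  · have h1 := (czero_hasSum (A x)).mapL S
    rw [hST] at h1
    simpa [A] using h1
end
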